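/- Let A be a finite invertible Mealy automaton over X and let B be a subautomaton of A (a nonempty subset of the states of A closed under transitions, with the induced transition-output function). Suppose there exists an integer n such that s|_v is a state of B for every state s of A and every word v ∈ X^n. Then the group G_A is finite if and only if the group G_B is finite. -/

import Mathlib

/-- A Mealy automaton over alphabet `X` with state set `S`:
the transition-output function sends `(s, x)` to `(output letter, next state)`. -/
structure Mealy (S X : Type*) where
  step : S → X → X × S

namespace Mealy

variable {S X : Type*}

/-- The section `s|_v`: the state reached after processing the word `v` from state `s`. -/
def sec (A : Mealy S X) (s : S) : List X → S
  | [] => s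
  | x :: v => A.sec (A.step s x).2 v

/-- The action of a state on finite words (lists of letters, read left to right). -/
def act (A : Mealy S X) (s : S) : List X → List X
  | [] => []
  | x :: v => (A.step s x).1 :: A.act (A.step s x).2 v

/-- A state is trivial if it acts on `X^*` as the identity. -/
def IsTrivialState (A : Mealy S X) (s : S) : Prop := ∀ v : List X, A.act s v = v

/-- An automaton is invertible if every state acts on the letters by a permutation. -/
def Invertible (A : Mealy S X) : Prop :=
  ∀ s : S, Function.Bijective fun x : X => (A.step s x).1

/-- The automaton group `G_A`: the subgroup of permutations of `X^*` generated by
the permutations defined by the states of `A`. -/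
def autGroup (A : Mealy S X) : Subgroup (Equiv.Perm (List X)) :=
  Subgroup.closure { f : Equiv.Perm (List X) | ∃ s : S, ∀ v : List X, f v = A.act s v }

/-- A left-infinite sequence `…x₂x₁` is encoded as `p : ℕ → X` with `p 0 = x₁`, `p 1 = x₂`, ….
It is post-critical if it is the sequence of input labels or of output labels of a
left-infinite directed path in `A` ending at a non-trivial state. -/
def IsPostCritical (A : Mealy S X) (p : ℕ → X) : Prop :=
  ∃ (σ : ℕ → S) (inp out : ℕ → X),
    (∀ n, A.step (σ (n + 1)) (inp n) = (out n, σ n)) ∧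
      ¬A.IsTrivialState (σ 0) ∧ (p = inp ∨ p = out)

/-- The post-critical set of `A`. -/
def PostCriticalSet (A : Mealy S X) : Set (ℕ → X) := { p | A.IsPostCritical p }

/-- An automaton is bounded if its post-critical set is finite. -/
def Bounded (A : Mealy S X) : Prop := A.PostCriticalSet.Finite

/-- The length-`n` suffix (as a finite word, read left to right) of a left-infinite
sequence `…x₂x₁` encoded as `p : ℕ → X`: the word `xₙ…x₂x₁`. -/
def lsuffix (p : ℕ → X) (n : ℕ) : List X := (List.range n).reverse.map p

/-- A finite word is post-critical if it is a suffix of some post-critical sequence. -/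
def IsPostCriticalWord (A : Mealy S X) (v : List X) : Prop :=
  ∃ p : ℕ → X, A.IsPostCritical p ∧ v = lsuffix p v.length

/-- The base relation for `e`-equivalence: `v ≈ u` if some state `s` satisfies
`s|_v` trivial and `s(v) = u`, or `s|_u` trivial and `s(u) = v`. -/
def ERel (A : Mealy S X) (v u : List X) : Prop :=
  ∃ s : S, (A.IsTrivialState (A.sec s v) ∧ A.act s v = u) ∨
    (A.IsTrivialState (A.sec s u) ∧ A.act s u = v)

/-- `e`-equivalence: the equivalence relation generated by `≈`. -/
def EEquiv (A : Mealy S X) : List X → List X → Prop := Relation.EqvGen A.ERel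

/-- The `e`-orbit of a word. -/
def eOrbit (A : Mealy S X) (v : List X) : Set (List X) := { u | A.EEquiv v u }

/-- The orbit of a finite word under the automaton group. -/
def orbit (A : Mealy S X) (v : List X) : Set (List X) := { u | ∃ g ∈ A.autGroup, g v = u }

/-- Reachability by a directed path in the automaton. -/
def Reaches (A : Mealy S X) : S → S → Prop :=
  Relation.ReflTransGen fun a b => ∃ x : X, (A.step a x).2 = b

/-- The states of the circuit part `C(A)`: states reachable by a directed path
from some directed cycle of `A`. -/
def circuitStates (A : Mealy S X) : Set S :=
  { s | ∃ t : S, (∃ x : X, A.Reaches (A.step t x).2 t) ∧ A.Reaches t s }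

/-- The circuit part `C(A)` as a subautomaton. -/
def circuitPart (A : Mealy S X) : Mealy A.circuitStates X where
  step s x :=
    ((A.step s.1 x).1,
      ⟨(A.step s.1 x).2, by
        obtain ⟨t, hc, hr⟩ := s.2
        exact ⟨t, hc, hr.tail ⟨x, rfl⟩⟩⟩)

/-- The subautomaton induced on a subset of states closed under transitions. -/
def subautomaton (A : Mealy S X) (T : Set S)
    (hT : ∀ s ∈ T, ∀ x : X, (A.step s x).2 ∈ T) : Mealy T X where
  step s x := ((A.step s.1 x).1, ⟨(A.step s.1 x).2, hT s.1 s.2 x⟩)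

/-- The extension of a length- and prefix-preserving map on finite words to
right-infinite sequences (letter by letter). -/
def extOmega (f : List X → List X) (w : ℕ → X) : ℕ → X :=
  fun n => (f ((List.range (n + 1)).map w)).getD n (w n)

/-- The orbit of a right-infinite sequence under the automaton group. -/
def orbitOmega (A : Mealy S X) (w : ℕ → X) : Set (ℕ → X) :=
  { w' | ∃ g ∈ A.autGroup, w' = extOmega (⇑(g : Equiv.Perm (List X))) w }

/-- The group `G_A` is level-transitive if it acts transitively on each level `X^n`. -/
def LevelTransitive (A : Mealy S X) : Prop :=
  ∀ v u : List X, v.length = u.length → ∃ g ∈ A.autGroup, g v = u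

end Mealy

/-- The run of a deterministic finite-state machine on a right-infinite input:
`dfaRun δ q₀ w n` is the state after reading the first `n` letters. -/
def dfaRun {Q X : Type*} (δ : Q → X → Q) (q₀ : Q) (w : ℕ → X) : ℕ → Q
  | 0 => q₀
  | n + 1 => δ (dfaRun δ q₀ w n) (w n)

/-- A concrete encoding of an invertible Mealy automaton (with state set `Fin n`
over alphabet `Fin k`) as a natural number. -/
def encodeAut (n k : ℕ) (step : Fin n → Fin k → Fin k × Fin n) : ℕ :=
  Nat.pair n (Nat.pair k (Encodable.encode
    ((List.finRange n).flatMap fun s =>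
      (List.finRange k).map fun x =>
        Nat.pair ((step s x).1 : ℕ) ((step s x).2 : ℕ))))


namespace Mealy

variable {S X : Type*}

theorem act_length (A : Mealy S X) (s : S) (v : List X) : (A.act s v).length = v.length := by
  induction v generalizing s with
  | nil => rfl
  | cons x v ih => simp [act, ih]

theorem act_append (A : Mealy S X) (s : S) (v w : List X) :
    A.act s (v ++ w) = A.act s v ++ A.act (A.sec s v) w := by
  induction v generalizing s with
  | nil => rfl
  | cons x v ih => simp [act, sec, ih]

theorem act_bijective (A : Mealy S X) (h : A.Invertible) (s : S) :
    Function.Bijective (A.act s) := by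
  constructor
  · intro v
    induction v generalizing s with
    | nil =>
      intro w hw
      cases w with
      | nil => rfl
      | cons y w => simp [act] at hw
    | cons x v ih =>
      intro w hw
      cases w with
      | nil => simp [act] at hw
      | cons y w =>
        simp only [act, List.cons.injEq] at hw
        have hxy : x = y := (h s).1 hw.1
        subst hxy
        rw [ih _ hw.2]
  · intro v
    induction v generalizing s with
    | nil => exact ⟨[], rfl⟩
    | cons x v ih =>
      obtain ⟨y, hy⟩ := (h s).2 x
      obtain ⟨w, hw⟩ := ih (A.step s y).2
      refine ⟨y :: w, ?_⟩
      simp only [act, hw]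
      rw [show (A.step s y).1 = x from hy]

theorem sub_act (A : Mealy S X) (T : Set S) (hT : ∀ s ∈ T, ∀ x : X, (A.step s x).2 ∈ T)
    (s : T) (v : List X) : (A.subautomaton T hT).act s v = A.act s.1 v := by
  induction v generalizing s with
  | nil => rfl
  | cons x v ih => simp only [act, ih]; rfl

theorem sub_le (A : Mealy S X) (T : Set S) (hT : ∀ s ∈ T, ∀ x : X, (A.step s x).2 ∈ T) :
    (A.subautomaton T hT).autGroup ≤ A.autGroup := by
  apply Subgroup.closure_mono
  rintro f ⟨s, hs⟩
  exact ⟨s.1, fun v => by rw [hs, sub_act]⟩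

theorem section_mem (A : Mealy S X) (hInv : A.Invertible) (T : Set S)
    (hT : ∀ s ∈ T, ∀ x : X, (A.step s x).2 ∈ T)
    (n : ℕ) (hn : ∀ (s : S) (v : List X), v.length = n → A.sec s v ∈ T)
    (g : Equiv.Perm (List X)) (hg : g ∈ A.autGroup) :
    (∀ v, (g v).length = v.length) ∧ ∀ v : List X, v.length = n →
      ∃ h ∈ (A.subautomaton T hT).autGroup, ∀ w, g (v ++ w) = g v ++ h w := by
  induction hg using Subgroup.closure_induction with
  | mem f hf =>
    obtain ⟨s, hs⟩ := hf
    refine ⟨fun v => by rw [hs, act_length], fun v hv => ?_⟩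
    refine ⟨Equiv.ofBijective _ (A.act_bijective hInv (A.sec s v)),
      Subgroup.subset_closure ⟨⟨A.sec s v, hn s v hv⟩, fun w => ?_⟩, fun w => ?_⟩
    · rw [sub_act]; rfl
    · rw [hs, hs, act_append]; rfl
  | one => exact ⟨fun v => rfl, fun v _ => ⟨1, one_mem _, fun w => rfl⟩⟩
  | mul a b _ _ ha hb =>
    refine ⟨fun v => by rw [Equiv.Perm.mul_apply, ha.1, hb.1], fun v hv => ?_⟩
    obtain ⟨h, hh, e⟩ := hb.2 v hv
    obtain ⟨k, hk, e'⟩ := ha.2 (b v) (by rw [hb.1, hv])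
    exact ⟨k * h, mul_mem hk hh, fun w => by simp only [Equiv.Perm.mul_apply, e, e']⟩
  | inv a _ ha =>
    have hi : ∀ (p : Equiv.Perm (List X)) (v : List X), p (p⁻¹ v) = v := fun p v =>
      Equiv.apply_symm_apply p v
    have hl : ∀ v, (a⁻¹ v).length = v.length := fun v => by
      rw [← ha.1 (a⁻¹ v), hi]
    refine ⟨hl, fun v hv => ?_⟩
    obtain ⟨h, hh, e⟩ := ha.2 (a⁻¹ v) (by rw [hl, hv])
    refine ⟨h⁻¹, inv_mem hh, fun w => ?_⟩
    rw [Equiv.Perm.inv_eq_iff_eq, e, hi, hi]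

end Mealy

/-- If `B` is a subautomaton of a finite invertible automaton `A` and
there is `n` with `s|_v ∈ B` for every state `s` of `A` and every `v ∈ Xⁿ`, then
`G_A` is finite iff `G_B` is finite. -/
theorem finite_iff_finite_subautomaton {S X : Type*} [Fintype S] [Fintype X]
    (hX : 2 ≤ Fintype.card X) (A : Mealy S X) (hInv : A.Invertible)
    (T : Set S) (hTne : T.Nonempty)
    (hT : ∀ s ∈ T, ∀ x : X, (A.step s x).2 ∈ T)
    (n : ℕ) (hn : ∀ (s : S) (v : List X), v.length = n → A.sec s v ∈ T) :
    Finite A.autGroup ↔ Finite (A.subautomaton T hT).autGroup := by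
  constructor
  · intro h
    exact Finite.of_injective _ (Subgroup.inclusion_injective (A.sub_le T hT))
  · intro h
    have key := fun g : A.autGroup => A.section_mem hInv T hT n hn g.1 g.2
    choose hlen σ hσ hsec using key
    have f1 : Finite {l : List X // l.length ≤ n} := (List.finite_length_le X n).to_subtype
    have f2 : Finite {l : List X // l.length = n} := (List.finite_length_eq X n).to_subtype
    let F : A.autGroup → ({l : List X // l.length ≤ n} → {l : List X // l.length ≤ n}) ×
        ({l : List X // l.length = n} → (A.subautomaton T hT).autGroup) := fun g =>
      (fun l => ⟨g.1 l.1, by rw [hlen]; exact l.2⟩, fun l => ⟨σ g l.1 l.2, hσ g l.1 l.2⟩)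
    refine Finite.of_injective F ?_
    intro g g' hgg
    have h1 : ∀ l : List X, l.length ≤ n → g.1 l = g'.1 l := fun l hl =>
      congrArg Subtype.val (congrFun (congrArg Prod.fst hgg) ⟨l, hl⟩)
    have h2 : ∀ (l : List X) (hl : l.length = n), σ g l hl = σ g' l hl := fun l hl =>
      congrArg Subtype.val (congrFun (congrArg Prod.snd hgg) ⟨l, hl⟩)
    apply Subtype.ext
    apply Equiv.ext
    intro v
    by_cases hv : v.length ≤ n
    · exact h1 v hv
    · have hl : (v.take n).length = n := by rw [List.length_take]; omega
      rw [← List.take_append_drop n v, hsec g _ hl, hsec g' _ hl, h2, h1 _ hl.le]
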